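/- Let 0 < R₁ < R₂ and n ≥ 3. Let S'(R₂) ⊂ ℝⁿ be the sphere of radius R₂ centered at a point c with |c| ≤ R₂ - R₁, and S(R₂) the sphere of radius R₂ centered at the origin. Let r(p) = |p| denote the distance of a point p from the origin. Then ∫_{S'(R₂)} (1/R₁^{n-2} − 1/r^{n-2})² dσ ≥ ∫_{S(R₂)} (1/R₁^{n-2} − 1/R₂^{n-2})² dσ, with equality if and only if c = 0. -/

import Mathlib

open MeasureTheory Metric

open Set Module Filter
open scoped Topology RealInnerProductSpace Laplacian

/-!
Put `k x = 1 / ‖x‖ ^ (n - 2)`. By Newton's shell theorem the mean of `k` over a sphere of radius `R`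
whose centre `c` satisfies `‖c‖ < R` is `1 / R ^ (n - 2)`, so Jensen's inequality bounds the mean of
`φ ∘ k` from below by `φ (1 / R ^ (n - 2))` for every convex `φ`. If `φ` is strictly convex,
equality forces `‖x + c‖ = R` for almost every `x` in `S(R)`; comparing `x` with `-x` in the
parallelogram law then gives `c = 0`.

For the shell theorem, the mean of `k (x + c)` over `x` in `S(R)` depends on `c` only through `‖c‖`,
so `c` may also be averaged over `S(‖c‖)`. After exchanging the two averages, the inner one is over
`y ↦ k (x + y)`, which is harmonic near the ball of radius `‖c‖`, and equals `k x`.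

The mean value property holds for every finite rotation-invariant measure `μ` on a ball: the
spherical Laplacian is a sum of squares of rotation generators, hence has integral zero against `μ`
and its dilates. For harmonic `f` this says that `J t = ∫ Df(t x) x dμ` satisfies
`t * dJ/dt + (n - 1) * J = 0`. Then `J ^ 2` is nonincreasing and `J 0 = 0`, so `J` vanishes and
`∫ f (t x) dμ` is constant in `t`.
-/

section CompactlySupportedMeasures

variable {X G : Type*} [NormedAddCommGroup G] [MeasurableSpace X] {K : Set X}

theorem integrable_of_continuousOn_of_ae_mem_isCompact [TopologicalSpace X] [T2Space X]
    [OpensMeasurableSpace X] {μ : Measure X} [IsFiniteMeasureOnCompacts μ] {f : X → G}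
    (hK : IsCompact K) (hμK : ∀ᵐ x ∂μ, x ∈ K) (hf : ContinuousOn f K) : Integrable f μ := by
  have h := hf.integrableOn_compact (μ := μ) hK
  rwa [IntegrableOn, Measure.restrict_eq_self_of_ae_mem hμK] at h

theorem hasDerivAt_integral_of_contDiffAt [NormedAddCommGroup X] [NormedSpace ℝ X]
    [OpensMeasurableSpace X] {μ : Measure X} [IsFiniteMeasure μ] [NormedSpace ℝ G]
    (hK : IsCompact K) (hμK : ∀ᵐ x ∂μ, x ∈ K) {F : ℝ → X → G} {F' : X → G} {t : ℝ}
    (hF : ∀ x ∈ K, ContDiffAt ℝ 1 (fun z : ℝ × X => F z.1 z.2) (t, x))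
    (hF' : ∀ x ∈ K, HasDerivAt (F · x) (F' x) t) :
    HasDerivAt (fun τ => ∫ x, F τ x ∂μ) (∫ x, F' x ∂μ) t := by
  set f : ℝ × X → G := fun z => F z.1 z.2
  let U : Set (ℝ × X) := {z | ContDiffAt ℝ 1 f z}
  have hU : IsOpen U := isOpen_iff_eventually.2 fun z (hz : ContDiffAt ℝ 1 f z) =>
    hz.eventually (by simp)
  obtain ⟨V, W, hV, -, htV, hKW, hVW⟩ := generalized_tube_lemma (isCompact_singleton (x := t)) hK hU
    (by rintro ⟨_, x⟩ ⟨rfl, hx⟩; exact hF x hx)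
  obtain ⟨ε, hε, hεV⟩ := nhds_basis_closedBall.mem_iff.1 (hV.mem_nhds (htV rfl))
  have hf : ∀ τ ∈ closedBall t ε, ∀ x ∈ K, ContDiffAt ℝ 1 f (τ, x) :=
    fun τ hτ x hx => hVW ⟨hεV hτ, hKW hx⟩
  have hderiv : ∀ τ ∈ closedBall t ε, ∀ x ∈ K,
      HasDerivAt (F · x) (fderiv ℝ f (τ, x) (1, 0)) τ := fun τ hτ x hx =>
    ((hf τ hτ x hx).differentiableAt one_ne_zero).hasFDerivAt.comp_hasDerivAt
      (f := fun σ => (σ, x)) τ ((hasDerivAt_id τ).prodMk (hasDerivAt_const τ x))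
  have hcont : ContinuousOn (fun z => fderiv ℝ f z (1, 0)) (closedBall t ε ×ˢ K) :=
    fun z hz => (((hf z.1 hz.1 z.2 hz.2).continuousAt_fderiv one_ne_zero).clm_apply
      continuousAt_const).continuousWithinAt
  obtain ⟨C, hC⟩ := ((isCompact_closedBall t ε).prod hK).exists_bound_of_continuousOn hcont
  have htε := mem_closedBall_self (x := t) hε.le
  have hint : ∀ τ ∈ closedBall t ε, Integrable (F τ) μ := fun τ hτ =>
    integrable_of_continuousOn_of_ae_mem_isCompact hK hμK fun x hx =>
      ((hf τ hτ x hx).continuousAt.comp (f := fun y => (τ, y))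
        (by fun_prop)).continuousWithinAt
  have hint' : Integrable (fun x => fderiv ℝ f (t, x) (1, 0)) μ :=
    integrable_of_continuousOn_of_ae_mem_isCompact hK hμK
      (hcont.comp (f := fun y => (t, y)) (by fun_prop) fun x hx => ⟨htε, hx⟩)
  have hderivInt := (hasDerivAt_integral_of_dominated_loc_of_deriv_le (μ := μ) (F := F)
    (F' := fun τ x => fderiv ℝ f (τ, x) (1, 0)) (closedBall_mem_nhds t hε)
    (Filter.eventually_of_mem (closedBall_mem_nhds t hε) fun τ hτ => (hint τ hτ).1)
    (hint t htε) hint'.1 (hμK.mono fun x hx τ hτ => hC (τ, x) ⟨hτ, hx⟩)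
    (integrable_const C) (hμK.mono fun x hx τ hτ => hderiv τ hτ x hx)).2
  rwa [integral_congr_ae (hμK.mono fun x hx => (hF' x hx).unique (hderiv t htε x hx))]

end CompactlySupportedMeasures

section OrthogonalInvariance

variable {E : Type*} [NormedAddCommGroup E] [InnerProductSpace ℝ E] [MeasurableSpace E]

/-- A measure invariant under all linear isometries; the surface measure of a sphere centred at
the origin is the example of interest. -/
class IsOrthogonallyInvariant (μ : Measure E) : Prop where
  measurePreserving (L : E ≃ₗᵢ[ℝ] E) : MeasurePreserving L μ μ

theorem eq_zero_of_ae_norm_add_eq {μ : Measure E} [IsOrthogonallyInvariant μ] [NeZero μ]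
    {R : ℝ} {c : E} (hμ : ∀ᵐ x ∂μ, ‖x‖ = R) (h : ∀ᵐ x ∂μ, ‖x + c‖ = R) : c = 0 := by
  have hneg : ∀ᵐ x ∂μ, ‖-x + c‖ = R :=
    (IsOrthogonallyInvariant.measurePreserving (μ := μ) (.neg ℝ)).quasiMeasurePreserving.ae h
  obtain ⟨x, hx, hxc, hxc'⟩ := (hμ.and (h.and hneg)).exists
  rw [neg_add_eq_sub, norm_sub_rev] at hxc'
  have := parallelogram_law_with_norm ℝ x c
  rw [hx, hxc, hxc'] at this
  simpa using (by linarith : ‖c‖ * ‖c‖ = 0)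

variable [BorelSpace E] {G : Type*} [NormedAddCommGroup G] [NormedSpace ℝ G]

theorem integral_comp_linearIsometryEquiv (μ : Measure E) [IsOrthogonallyInvariant μ]
    (L : E ≃ₗᵢ[ℝ] E) (f : E → G) : ∫ x, f (L x) ∂μ = ∫ x, f x ∂μ :=
  (IsOrthogonallyInvariant.measurePreserving L).integral_comp
    L.toHomeomorph.measurableEmbedding f

theorem integral_comp_norm_add_eq (μ : Measure E) [IsOrthogonallyInvariant μ] (g : ℝ → G)
    {y z : E} (hyz : ‖y‖ = ‖z‖) : ∫ x, g ‖x + y‖ ∂μ = ∫ x, g ‖x + z‖ ∂μ := by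
  let L : E ≃ₗᵢ[ℝ] E := Submodule.reflection (ℝ ∙ (y - z))ᗮ
  have hLy : L y = z := Submodule.reflection_sub hyz
  rw [← integral_comp_linearIsometryEquiv μ L fun x => g ‖x + z‖]
  simp_rw [← hLy, ← map_add, L.norm_map]

variable {μ : Measure E} [IsOrthogonallyInvariant μ]

instance isOrthogonallyInvariant_map_smul (t : ℝ) :
    IsOrthogonallyInvariant (μ.map (t • · : E → E)) where
  measurePreserving L := by
    refine ⟨L.continuous.measurable, ?_⟩
    rw [Measure.map_map L.continuous.measurable (measurable_const_smul t)]
    have hcomm : (L ∘ (t • ·) : E → E) = (t • ·) ∘ L := funext fun x => L.map_smul t x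
    rw [hcomm, ← Measure.map_map (measurable_const_smul t) L.continuous.measurable,
      (IsOrthogonallyInvariant.measurePreserving (μ := μ) L).map_eq]

theorem integral_fderiv_apply_skewAdjoint_eq_zero [FiniteDimensional ℝ E] [IsFiniteMeasure μ]
    {R : ℝ} (hμ : ∀ᵐ x ∂μ, x ∈ closedBall (0 : E) R) {A : E →L[ℝ] E}
    (hA : A ∈ skewAdjoint (E →L[ℝ] E)) {f : E → G}
    (hf : ∀ x ∈ closedBall (0 : E) R, ContDiffAt ℝ 1 f x) : ∫ x, fderiv ℝ f x (A x) ∂μ = 0 := by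
  let _ : NormedAlgebra ℚ (E →L[ℝ] E) := .restrictScalars ℚ ℝ _
  have hexp (θ : ℝ) : NormedSpace.exp (θ • A) ∈ unitary (E →L[ℝ] E) :=
    NormedSpace.exp_mem_unitary_of_mem_skewAdjoint (skewAdjoint.smul_mem θ hA)
  have hflow (x : E) : HasDerivAt (fun θ : ℝ => NormedSpace.exp (θ • A) x) (A x) 0 := by
    simpa using (hasDerivAt_exp_smul_const' A (0 : ℝ)).clm_apply (hasDerivAt_const 0 x)
  have hsmooth (x : E) : ContDiffAt ℝ 1
      (fun z : ℝ × E => NormedSpace.exp (z.1 • A) z.2) (0, x) :=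
    ((NormedSpace.exp_analytic _).contDiffAt.comp ((0 : ℝ), x)
      (contDiffAt_fst.smul contDiffAt_const)).clm_apply contDiffAt_snd
  have hderiv : HasDerivAt (fun θ : ℝ => ∫ x, f (NormedSpace.exp (θ • A) x) ∂μ)
      (∫ x, fderiv ℝ f x (A x) ∂μ) 0 := by
    refine hasDerivAt_integral_of_contDiffAt (isCompact_closedBall 0 R) hμ (fun x hx => ?_)
      fun x hx => ?_
    · exact ContDiffAt.comp (0, x) (by simpa using hf x hx) (hsmooth x)
    · have hfx : HasFDerivAt f (fderiv ℝ f x) (NormedSpace.exp ((0 : ℝ) • A) x) := by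
        simpa using ((hf x hx).differentiableAt one_ne_zero).hasFDerivAt
      exact hfx.comp_hasDerivAt 0 (hflow x)
  have hconst : (fun θ : ℝ => ∫ x, f (NormedSpace.exp (θ • A) x) ∂μ) = fun _ => ∫ x, f x ∂μ :=
    funext fun θ => integral_comp_linearIsometryEquiv μ
      (Unitary.linearIsometryEquiv ⟨_, hexp θ⟩) f
  rw [hconst] at hderiv
  exact hderiv.unique (hasDerivAt_const 0 _)

end OrthogonalInvariance

section SphericalLaplacian

variable {E : Type*} [NormedAddCommGroup E] [InnerProductSpace ℝ E]
  {G : Type*} [NormedAddCommGroup G] [NormedSpace ℝ G]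

theorem fderiv_inner_smul_fderiv_apply {f : E → G} {x : E} (hf : ContDiffAt ℝ 2 f x) (u w v : E) :
    fderiv ℝ (fun y => ⟪w, y⟫ • fderiv ℝ f y u) x v =
      ⟪w, x⟫ • fderiv ℝ (fderiv ℝ f) x v u + ⟪w, v⟫ • fderiv ℝ f x u := by
  have hDf : HasFDerivAt (fderiv ℝ f) (fderiv ℝ (fderiv ℝ f) x) x :=
    ((hf.fderiv_right (m := 1) le_rfl).differentiableAt one_ne_zero).hasFDerivAt
  have h := ((innerSL ℝ w).hasFDerivAt (x := x)).smul (hDf.clm_apply (hasFDerivAt_const u x))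
  change fderiv ℝ ((fun y => ⟪w, y⟫) • fun y => fderiv ℝ f y u) x v = _
  simpa using DFunLike.congr_fun h.fderiv v

theorem sum_inner_smul_map {ι : Type*} [Fintype ι] (b : OrthonormalBasis ι ℝ E)
    (D : E →L[ℝ] G) (x : E) : ∑ i, ⟪b i, x⟫ • D (b i) = D x := by
  simp_rw [← map_smul, ← map_sum, b.sum_repr']

/-- The infinitesimal rotation in the plane spanned by `u` and `w` that turns `u` towards `w`. -/
noncomputable def infinitesimalRotation (u w : E) : E →L[ℝ] E :=
  InnerProductSpace.rankOne ℝ w u - InnerProductSpace.rankOne ℝ u w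

theorem infinitesimalRotation_apply (u w x : E) :
    infinitesimalRotation u w x = ⟪u, x⟫ • w - ⟪w, x⟫ • u := rfl

variable [FiniteDimensional ℝ E]

theorem infinitesimalRotation_mem_skewAdjoint (u w : E) :
    infinitesimalRotation u w ∈ skewAdjoint (E →L[ℝ] E) := by
  simp [infinitesimalRotation, skewAdjoint.mem_iff, ContinuousLinearMap.star_eq_adjoint]

/-- The function `r ^ 2 • Δ_{S(r)} f` at the points `x` of norm `r`: the Laplace–Beltrami operator
of the sphere through `x`, rescaled so as to be a polynomial in the rotation generators and
expressed through the derivatives of `f` in the ambient space. -/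
noncomputable def sphericalLaplacian (f : E → G) (x : E) : G :=
  ‖x‖ ^ 2 • Δ f x - fderiv ℝ (fderiv ℝ f) x x x - (finrank ℝ E - 1 : ℝ) • fderiv ℝ f x x

-- With `A i j` the derivative along `infinitesimalRotation (b i) (b j)`, antisymmetry in `i` and
-- `j` turns the left-hand side into `-∑ A i j (A i j f)` over pairs `i < j`.
theorem sum_fderiv_apply_infinitesimalRotation {ι : Type*} [Fintype ι]
    (b : OrthonormalBasis ι ℝ E) {f : E → G} {x : E} (hf : ContDiffAt ℝ 2 f x) :
    ∑ i, ∑ j, fderiv ℝ (fun y => ⟪b j, y⟫ • fderiv ℝ f y (b i)) x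
        (infinitesimalRotation (b i) (b j) x) = -sphericalLaplacian f x := by
  classical
  set D := fderiv ℝ f x
  set B := fderiv ℝ (fderiv ℝ f) x
  have hterm (i j : ι) : fderiv ℝ (fun y => ⟪b j, y⟫ • fderiv ℝ f y (b i)) x
        (infinitesimalRotation (b i) (b j) x) =
      ⟪b j, x⟫ • ⟪b i, x⟫ • B (b j) (b i) - ⟪b j, x⟫ ^ 2 • B (b i) (b i) + ⟪b i, x⟫ • D (b i) -
        if j = i then ⟪b i, x⟫ • D (b i) else 0 := by
    rw [fderiv_inner_smul_fderiv_apply hf, infinitesimalRotation_apply]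
    rcases eq_or_ne j i with rfl | hij
    · simp [D, sq, smul_smul]
    · simp only [map_sub, map_smul, inner_sub_right, inner_smul_right, b.inner_eq_one,
        b.inner_eq_zero hij, if_neg hij]
      simp [B, D, smul_sub, sq, smul_smul]
  have hmixed : ∑ i, ∑ j, ⟪b j, x⟫ • ⟪b i, x⟫ • B (b j) (b i) = B x x := by
    rw [Finset.sum_comm]
    simp_rw [← Finset.smul_sum, sum_inner_smul_map b]
    exact sum_inner_smul_map b (B.flip x) x
  have hlaplacian : ∑ i, ∑ j, ⟪b j, x⟫ ^ 2 • B (b i) (b i) = ‖x‖ ^ 2 • Δ f x := by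
    simp [← Finset.sum_smul, b.sum_sq_inner_right, ← Finset.smul_sum, iteratedFDeriv_two_apply, B,
      InnerProductSpace.laplacian_eq_iteratedFDeriv_orthonormalBasis f b]
  simp only [hterm, Finset.sum_sub_distrib, Finset.sum_add_distrib, hmixed, hlaplacian,
    Finset.sum_ite_eq', Finset.mem_univ, if_true, sum_inner_smul_map b, Finset.sum_const,
    Finset.card_univ]
  rw [sphericalLaplacian, finrank_eq_card_basis b.toBasis, sub_smul, one_smul,
    Nat.cast_smul_eq_nsmul, ← Finset.smul_sum, sum_inner_smul_map b]
  abel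

theorem integral_sphericalLaplacian_eq_zero [MeasurableSpace E] [BorelSpace E] {μ : Measure E}
    [IsOrthogonallyInvariant μ] [IsFiniteMeasure μ] {R : ℝ}
    (hμ : ∀ᵐ x ∂μ, x ∈ closedBall (0 : E) R) {f : E → G}
    (hf : ∀ x ∈ closedBall (0 : E) R, ContDiffAt ℝ 2 f x) :
    ∫ x, sphericalLaplacian f x ∂μ = 0 := by
  let b := stdOrthonormalBasis ℝ E
  let h (i j) (y : E) : G := ⟪b j, y⟫ • fderiv ℝ f y (b i)
  have hh (i j) : ∀ x ∈ closedBall (0 : E) R, ContDiffAt ℝ 1 (h i j) x := fun x hx =>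
    (innerSL ℝ (b j)).contDiff.contDiffAt.smul
      (((hf x hx).fderiv_right (m := 1) le_rfl).clm_apply contDiffAt_const)
  have hint (i j) : Integrable
      (fun x => fderiv ℝ (h i j) x (infinitesimalRotation (b i) (b j) x)) μ :=
    integrable_of_continuousOn_of_ae_mem_isCompact (isCompact_closedBall 0 R) hμ fun x hx =>
      (((hh i j x hx).continuousAt_fderiv one_ne_zero).clm_apply
        (ContinuousLinearMap.continuous _).continuousAt).continuousWithinAt
  rw [← neg_eq_zero, ← integral_neg]
  calc _ = ∫ x, ∑ i, ∑ j, fderiv ℝ (h i j) x (infinitesimalRotation (b i) (b j) x) ∂μ :=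
        integral_congr_ae <| hμ.mono fun x hx =>
          (sum_fderiv_apply_infinitesimalRotation b (hf x hx)).symm
    _ = ∑ i, ∑ j, ∫ x, fderiv ℝ (h i j) x (infinitesimalRotation (b i) (b j) x) ∂μ := by
        rw [integral_finsetSum _ fun i _ => integrable_finsetSum _ fun j _ => hint i j]
        simp_rw [integral_finsetSum _ fun j _ => hint _ j]
    _ = 0 := by
        simp only [integral_fderiv_apply_skewAdjoint_eq_zero hμ
          (infinitesimalRotation_mem_skewAdjoint _ _) (hh _ _), Finset.sum_const_zero]

end SphericalLaplacian

section Dilations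

variable {E : Type*} [NormedAddCommGroup E] [NormedSpace ℝ E]
  {G : Type*} [NormedAddCommGroup G] [NormedSpace ℝ G] {R : ℝ}

theorem smul_mem_closedBall_zero {t : ℝ} (ht : t ∈ Icc (0 : ℝ) 1) {x : E}
    (hx : x ∈ closedBall (0 : E) R) : t • x ∈ closedBall (0 : E) R :=
  balanced_closedBall_zero.smul_mem ((Real.norm_of_nonneg ht.1).trans_le ht.2) hx

theorem hasDerivAt_comp_smul {g : E → G} {t : ℝ} {x : E} (hg : DifferentiableAt ℝ g (t • x)) :
    HasDerivAt (fun τ : ℝ => g (τ • x)) (fderiv ℝ g (t • x) x) t := by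
  have h : HasDerivAt (fun τ : ℝ => τ • x) x t := by
    simpa using (hasDerivAt_id t).smul_const x
  exact hg.hasFDerivAt.comp_hasDerivAt t h

variable [FiniteDimensional ℝ E] [MeasurableSpace E] [BorelSpace E] {μ : Measure E}
  [IsFiniteMeasure μ]

theorem hasDerivAt_integral_comp_smul {f : E → G} (hμ : ∀ᵐ x ∂μ, x ∈ closedBall (0 : E) R)
    (hf : ∀ x ∈ closedBall (0 : E) R, ContDiffAt ℝ 1 f x) {t : ℝ} (ht : t ∈ Icc (0 : ℝ) 1) :
    HasDerivAt (fun τ : ℝ => ∫ x, f (τ • x) ∂μ) (∫ x, fderiv ℝ f (t • x) x ∂μ) t := by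
  have hft {x : E} (hx : x ∈ closedBall (0 : E) R) := hf _ (smul_mem_closedBall_zero ht hx)
  exact hasDerivAt_integral_of_contDiffAt (isCompact_closedBall 0 R) hμ
    (fun x hx => ContDiffAt.comp (t, x) (hft hx) (contDiffAt_fst.smul contDiffAt_snd))
    fun x hx => hasDerivAt_comp_smul ((hft hx).differentiableAt one_ne_zero)

theorem hasDerivAt_integral_fderiv_smul_apply {f : E → G}
    (hμ : ∀ᵐ x ∂μ, x ∈ closedBall (0 : E) R)
    (hf : ∀ x ∈ closedBall (0 : E) R, ContDiffAt ℝ 2 f x) {t : ℝ} (ht : t ∈ Icc (0 : ℝ) 1) :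
    HasDerivAt (fun τ : ℝ => ∫ x, fderiv ℝ f (τ • x) x ∂μ)
      (∫ x, fderiv ℝ (fderiv ℝ f) (t • x) x x ∂μ) t := by
  have hft {x : E} (hx : x ∈ closedBall (0 : E) R) : ContDiffAt ℝ 1 (fderiv ℝ f) (t • x) :=
    (hf _ (smul_mem_closedBall_zero ht hx)).fderiv_right le_rfl
  refine hasDerivAt_integral_of_contDiffAt (isCompact_closedBall 0 R) hμ
    (fun x hx => (ContDiffAt.comp (t, x) (hft hx)
      (contDiffAt_fst.smul contDiffAt_snd)).clm_apply contDiffAt_snd) fun x hx => ?_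
  simpa using (hasDerivAt_comp_smul ((hft hx).differentiableAt one_ne_zero)).clm_apply
    (hasDerivAt_const t x)

end Dilations

section MeanValueProperty

theorem eq_zero_of_euler_ode {a : ℝ} (ha : 0 ≤ a) {J J' : ℝ → ℝ} (hJ0 : J 0 = 0)
    (hJ : ∀ t ∈ Icc (0 : ℝ) 1, HasDerivAt J (J' t) t)
    (hode : ∀ t ∈ Ioo (0 : ℝ) 1, t * J' t + a * J t = 0) {t : ℝ} (ht : t ∈ Icc (0 : ℝ) 1) :
    J t = 0 := by
  have hderiv : ∀ s ∈ Icc (0 : ℝ) 1, HasDerivAt (J ^ 2) (2 * J s * J' s) s :=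
    fun s hs => by simpa using (hJ s hs).pow 2
  have hanti : AntitoneOn (J ^ 2) (Icc 0 1) := by
    refine antitoneOn_of_hasDerivWithinAt_nonpos (convex_Icc 0 1)
      (fun s hs => (hderiv s hs).continuousAt.continuousWithinAt)
      (fun s hs => (hderiv s (interior_subset hs)).hasDerivWithinAt) fun s hs => ?_
    rw [interior_Icc] at hs
    have hdecay : s * (2 * J s * J' s) = -(2 * a * J s ^ 2) := by
      linear_combination 2 * J s * hode s hs
    exact nonpos_of_mul_nonpos_right (hdecay.trans_le (neg_nonpos.2 (by positivity))) hs.1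
  have h : J t ^ 2 ≤ 0 := by simpa [hJ0] using hanti (left_mem_Icc.2 zero_le_one) ht ht.1
  simpa using h.antisymm (sq_nonneg _)

theorem finrank_sub_one_nonneg (E : Type*) [AddCommGroup E] [Module ℝ E] [FiniteDimensional ℝ E]
    [Nontrivial E] : (0 : ℝ) ≤ finrank ℝ E - 1 :=
  sub_nonneg.2 (Nat.one_le_cast.2 finrank_pos)

variable {E : Type*} [NormedAddCommGroup E] [InnerProductSpace ℝ E] [FiniteDimensional ℝ E]
  [MeasurableSpace E] [BorelSpace E] {μ : Measure E} [IsFiniteMeasure μ]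
  [IsOrthogonallyInvariant μ] {R : ℝ} {f : E → ℝ}

theorem integral_radial_derivs_add_eq_zero (hμ : ∀ᵐ x ∂μ, x ∈ closedBall (0 : E) R)
    (hf : InnerProductSpace.HarmonicOnNhd f (closedBall 0 R)) {t : ℝ} (ht : t ∈ Ioo (0 : ℝ) 1) :
    t * ∫ x, fderiv ℝ (fderiv ℝ f) (t • x) x x ∂μ +
      (finrank ℝ E - 1 : ℝ) * ∫ x, fderiv ℝ f (t • x) x ∂μ = 0 := by
  have htx {x : E} (hx : x ∈ closedBall (0 : E) R) : t • x ∈ closedBall (0 : E) R :=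
    smul_mem_closedBall_zero (Ioo_subset_Icc_self ht) hx
  have hcont : ContinuousOn (fun x => fderiv ℝ f (t • x)) (closedBall 0 R) := fun x hx =>
    (((hf _ (htx hx)).1.continuousAt_fderiv two_ne_zero).comp
      (continuous_const_smul t).continuousAt).continuousWithinAt
  have hcont' : ContinuousOn (fun x => fderiv ℝ (fderiv ℝ f) (t • x)) (closedBall 0 R) :=
    fun x hx => ((((hf _ (htx hx)).1.fderiv_right (m := 1) le_rfl).continuousAt_fderiv
      one_ne_zero).comp (continuous_const_smul t).continuousAt).continuousWithinAt
  have hmap : ∀ᵐ x ∂μ.map (t • · : E → E), x ∈ closedBall (0 : E) R :=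
    (ae_map_iff (measurable_const_smul t).aemeasurable measurableSet_closedBall).2
      (hμ.mono fun x hx => htx hx)
  have hrot := integral_sphericalLaplacian_eq_zero hmap fun x hx => (hf x hx).1
  rw [(measurableEmbedding_const_smul₀ ht.1.ne').integral_map] at hrot
  have hscale : ∀ᵐ x ∂μ, sphericalLaplacian f (t • x) =
      -t * (t * fderiv ℝ (fderiv ℝ f) (t • x) x x +
        (finrank ℝ E - 1 : ℝ) * fderiv ℝ f (t • x) x) := hμ.mono fun x hx => by
    have hΔ : Δ f (t • x) = 0 := (hf _ (htx hx)).2.eq_of_nhds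
    simp only [sphericalLaplacian, map_smul, smul_apply, smul_eq_mul, hΔ]
    ring
  rw [integral_congr_ae hscale, integral_const_mul, mul_eq_zero,
    or_iff_right (neg_ne_zero.2 ht.1.ne'), integral_add, integral_const_mul,
    integral_const_mul] at hrot
  · exact hrot
  · exact .const_mul (integrable_of_continuousOn_of_ae_mem_isCompact (isCompact_closedBall 0 R) hμ
      ((hcont'.clm_apply continuousOn_id).clm_apply continuousOn_id)) _
  · exact .const_mul (integrable_of_continuousOn_of_ae_mem_isCompact (isCompact_closedBall 0 R) hμ
      (hcont.clm_apply continuousOn_id)) _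

theorem integral_eq_of_harmonicOnNhd [Nontrivial E] (hμ : ∀ᵐ x ∂μ, x ∈ closedBall (0 : E) R)
    (hf : InnerProductSpace.HarmonicOnNhd f (closedBall 0 R)) :
    ∫ x, f x ∂μ = μ.real univ * f 0 := by
  have hC2 : ∀ x ∈ closedBall (0 : E) R, ContDiffAt ℝ 2 f x := fun x hx => (hf x hx).1
  let J (t : ℝ) : ℝ := ∫ x, fderiv ℝ f (t • x) x ∂μ
  have hJ0 : J 0 = 0 := by
    have h := integral_comp_linearIsometryEquiv μ (.neg ℝ) fun x => fderiv ℝ f 0 x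
    simp only [LinearIsometryEquiv.coe_neg, map_neg, integral_neg] at h
    simpa [J] using self_eq_neg.1 h.symm
  have hJ : ∀ t ∈ Icc (0 : ℝ) 1, J t = 0 := fun t ht => eq_zero_of_euler_ode
    (finrank_sub_one_nonneg E) hJ0 (fun s hs => hasDerivAt_integral_fderiv_smul_apply hμ hC2 hs)
    (fun s hs => integral_radial_derivs_add_eq_zero hμ hf hs) ht
  have hmean (t : ℝ) (ht : t ∈ Icc (0 : ℝ) 1) : HasDerivAt (fun τ : ℝ => ∫ x, f (τ • x) ∂μ) 0 t :=
    hJ t ht ▸ hasDerivAt_integral_comp_smul hμ (fun x hx => (hC2 x hx).of_le one_le_two) ht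
  have h := constant_of_has_deriv_right_zero
    (fun t ht => (hmean t ht).continuousAt.continuousWithinAt)
    (fun t ht => (hmean t (Ico_subset_Icc_self ht)).hasDerivWithinAt) 1
    (right_mem_Icc.2 zero_le_one)
  simpa using h

end MeanValueProperty

section NewtonKernel

theorem add_ne_zero_of_norm_lt {E : Type*} [NormedAddGroup E] {x y : E} (h : ‖y‖ < ‖x‖) :
    x + y ≠ 0 := fun hxy => h.ne' (by rw [eq_neg_of_add_eq_zero_left hxy, norm_neg])

variable {E : Type*} [NormedAddCommGroup E] [InnerProductSpace ℝ E]

theorem hasFDerivAt_norm_rpow_of_ne_zero (q : ℝ) {x : E} (hx : x ≠ 0) :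
    HasFDerivAt (fun y : E => ‖y‖ ^ q) ((q * ‖x‖ ^ (q - 2)) • innerSL ℝ x) x := by
  have hsq (p : ℝ) (y : E) : (‖y‖ ^ 2) ^ (p / 2) = ‖y‖ ^ p := by
    rw [← Real.rpow_natCast_mul (norm_nonneg y)]
    congr 1
    push_cast
    ring
  have h := (hasStrictFDerivAt_norm_sq x).hasFDerivAt.rpow_const (p := q / 2)
    (Or.inl (by simpa using hx))
  simp only [hsq, show q / 2 - 1 = (q - 2) / 2 by ring] at h
  convert h using 1
  rw [← Nat.cast_smul_eq_nsmul ℝ, smul_smul]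
  congr 1
  push_cast
  ring

theorem fderiv_fderiv_norm_rpow (q : ℝ) {x : E} (hx : x ≠ 0) (v : E) :
    fderiv ℝ (fderiv ℝ fun y : E => ‖y‖ ^ q) x v v =
      q * (‖x‖ ^ (q - 2) * ‖v‖ ^ 2 + (q - 2) * ‖x‖ ^ (q - 4) * ⟪x, v⟫ ^ 2) := by
  have hgrad : (fderiv ℝ fun y : E => ‖y‖ ^ q) =ᶠ[𝓝 x]
      fun y => (q * ‖y‖ ^ (q - 2)) • innerSL ℝ y :=
    (eventually_ne_nhds hx).mono fun y hy => (hasFDerivAt_norm_rpow_of_ne_zero q hy).fderiv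
  have h : HasFDerivAt (fun y : E => (q * ‖y‖ ^ (q - 2)) • innerSL ℝ y) _ x :=
    ((hasFDerivAt_norm_rpow_of_ne_zero (q - 2) hx).const_mul q).smul (innerSL ℝ).hasFDerivAt
  rw [hgrad.fderiv_eq, h.fderiv]
  have hvv : innerSL ℝ v v = ‖v‖ ^ 2 := real_inner_self_eq_norm_sq v
  simp only [show q - 2 - 2 = q - 4 by ring, add_apply, smul_apply,
    ContinuousLinearMap.smulRight_apply, coe_innerSL_apply, smul_eq_mul, hvv]
  ring

variable (E) in
/-- The fundamental solution `1 / ‖x‖ ^ (n - 2)` of the Laplacian (up to normalisation), where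
`n` is the dimension of `E`. The exponent is a natural number, so it is truncated to `0` for
`n ≤ 2`. -/
noncomputable def newtonKernel (x : E) : ℝ := 1 / ‖x‖ ^ (finrank ℝ E - 2)

theorem newtonKernel_eq_norm_rpow (hE : 2 ≤ finrank ℝ E) :
    newtonKernel E = fun x => ‖x‖ ^ (2 - finrank ℝ E : ℝ) := by
  ext x
  rw [newtonKernel, one_div, ← Real.rpow_natCast, ← Real.rpow_neg (norm_nonneg x)]
  push_cast [hE]
  rw [neg_sub]

theorem continuousOn_newtonKernel_add :
    ContinuousOn (fun z : E × E => newtonKernel E (z.1 + z.2)) {z | ‖z.2‖ < ‖z.1‖} :=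
  continuousOn_const.div (by fun_prop) fun _ hz =>
    pow_ne_zero _ (norm_ne_zero_iff.2 (add_ne_zero_of_norm_lt hz))

variable [FiniteDimensional ℝ E]

theorem laplacian_norm_rpow (q : ℝ) {x : E} (hx : x ≠ 0) :
    Δ (fun y : E => ‖y‖ ^ q) x = q * (q + finrank ℝ E - 2) * ‖x‖ ^ (q - 2) := by
  have hpow : ‖x‖ ^ (q - 4) * ‖x‖ ^ 2 = ‖x‖ ^ (q - 2) := by
    rw [← Real.rpow_add_natCast (norm_ne_zero_iff.2 hx)]
    congr 1
    push_cast
    ring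
  rw [InnerProductSpace.laplacian_eq_iteratedFDeriv_stdOrthonormalBasis]
  simp only [iteratedFDeriv_two_apply, Matrix.cons_val_zero, Matrix.cons_val_one,
    fderiv_fderiv_norm_rpow q hx, OrthonormalBasis.norm_eq_one, ← Finset.mul_sum,
    Finset.sum_add_distrib]
  simp only [real_inner_comm _ x, OrthonormalBasis.sum_sq_inner_right, mul_assoc, hpow, one_pow,
    mul_one, Finset.sum_const, Finset.card_univ, Fintype.card_fin, nsmul_eq_mul]
  ring

theorem harmonicAt_newtonKernel (hE : 2 ≤ finrank ℝ E) {x : E} (hx : x ≠ 0) :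
    InnerProductSpace.HarmonicAt (newtonKernel E) x := by
  rw [newtonKernel_eq_norm_rpow hE]
  refine ⟨(contDiffAt_norm ℝ hx).rpow_const_of_ne (norm_ne_zero_iff.2 hx), ?_⟩
  filter_upwards [eventually_ne_nhds hx] with y hy
  simp [laplacian_norm_rpow _ hy]

end NewtonKernel

section ShellTheorem

variable {E : Type*} [NormedAddCommGroup E] [InnerProductSpace ℝ E] [FiniteDimensional ℝ E]

theorem harmonicAt_comp_add_left {G : Type*} [NormedAddCommGroup G] [NormedSpace ℝ G] {f : E → G}
    {x y : E} (hf : InnerProductSpace.HarmonicAt f (x + y)) :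
    InnerProductSpace.HarmonicAt (fun z => f (x + z)) y := by
  have hadd : ContDiffAt ℝ 2 (x + ·) y := contDiffAt_const.add contDiffAt_id
  refine ⟨hf.1.comp y hadd, ?_⟩
  filter_upwards [hadd.continuousAt.eventually hf.2] with z hz
  rw [InnerProductSpace.laplacian_eq_iteratedFDeriv_stdOrthonormalBasis] at hz ⊢
  simpa only [iteratedFDeriv_comp_add_left, Pi.zero_apply] using hz

variable [MeasurableSpace E] [BorelSpace E] {μ : Measure E} [IsOrthogonallyInvariant μ]
  [IsFiniteMeasure μ]

theorem integral_newtonKernel_add_of_mem_closedBall (hE : 2 ≤ finrank ℝ E) {r : ℝ}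
    (hμ : ∀ᵐ y ∂μ, y ∈ closedBall (0 : E) r) {x : E} (hx : r < ‖x‖) :
    ∫ y, newtonKernel E (x + y) ∂μ = μ.real univ * newtonKernel E x := by
  have : Nontrivial E := nontrivial_of_finrank_pos (R := ℝ) (by lia)
  have hharm :
      InnerProductSpace.HarmonicOnNhd (fun y => newtonKernel E (x + y)) (closedBall 0 r) :=
    fun y hy => harmonicAt_comp_add_left <| harmonicAt_newtonKernel hE <|
      add_ne_zero_of_norm_lt ((mem_closedBall_zero_iff.1 hy).trans_lt hx)
  simpa using integral_eq_of_harmonicOnNhd hμ hharm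

variable {ν : Measure E} [IsOrthogonallyInvariant ν] [IsFiniteMeasure ν] {R : ℝ} {c : E}

theorem measureReal_mul_integral_newtonKernel_add (hE : 2 ≤ finrank ℝ E)
    (hμ : ∀ᵐ x ∂μ, x ∈ sphere (0 : E) R) (hν : ∀ᵐ y ∂ν, y ∈ sphere (0 : E) ‖c‖) (hc : ‖c‖ < R) :
    ν.real univ * ∫ x, newtonKernel E (x + c) ∂μ =
      μ.real univ * (ν.real univ * (1 / R ^ (finrank ℝ E - 2))) := by
  have hint : Integrable (fun z : E × E => newtonKernel E (z.1 + z.2)) (μ.prod ν) := by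
    refine integrable_of_continuousOn_of_ae_mem_isCompact
      ((isCompact_sphere (0 : E) R).prod (isCompact_sphere (0 : E) ‖c‖)) ?_
      (continuousOn_newtonKernel_add.mono fun z hz => ?_)
    · filter_upwards [Measure.quasiMeasurePreserving_fst.ae hμ,
        Measure.quasiMeasurePreserving_snd.ae hν] with z hz hz' using ⟨hz, hz'⟩
    · simpa only [mem_ofPred_eq, mem_sphere_zero_iff_norm.1 hz.1,
        mem_sphere_zero_iff_norm.1 hz.2] using hc
  calc _ = ∫ y, ∫ x, newtonKernel E (x + y) ∂μ ∂ν := by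
        rw [← smul_eq_mul, ← integral_const]
        exact integral_congr_ae <| hν.mono fun y hy =>
          integral_comp_norm_add_eq μ (fun s => 1 / s ^ (finrank ℝ E - 2))
            (mem_sphere_zero_iff_norm.1 hy).symm
    _ = ∫ x, ∫ y, newtonKernel E (x + y) ∂ν ∂μ := (integral_integral_swap hint).symm
    _ = ∫ x, ν.real univ * (1 / R ^ (finrank ℝ E - 2)) ∂μ :=
        integral_congr_ae <| hμ.mono fun x hx => by
          rw [mem_sphere_zero_iff_norm] at hx
          dsimp only
          rw [integral_newtonKernel_add_of_mem_closedBall hE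
            (hν.mono fun y hy => sphere_subset_closedBall hy) (hx ▸ hc), newtonKernel, hx]
    _ = _ := by rw [integral_const, smul_eq_mul]

theorem integral_newtonKernel_add (hE : 2 ≤ finrank ℝ E) (hμ : ∀ᵐ x ∂μ, x ∈ sphere (0 : E) R)
    (hc : ‖c‖ < R) :
    ∫ x, newtonKernel E (x + c) ∂μ = μ.real univ * (1 / R ^ (finrank ℝ E - 2)) := by
  rcases eq_zero_or_neZero μ with rfl | hμ0
  · simp
  have hR : 0 < R := (norm_nonneg c).trans_lt hc
  have hscale : Measurable ((‖c‖ / R) • · : E → E) := measurable_const_smul _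
  have hν : ∀ᵐ y ∂μ.map ((‖c‖ / R) • · : E → E), y ∈ sphere (0 : E) ‖c‖ := by
    refine (ae_map_iff hscale.aemeasurable isClosed_sphere.measurableSet).2 (hμ.mono fun x hx => ?_)
    have hx' : ‖x‖ = R := mem_sphere_zero_iff_norm.1 hx
    change (‖c‖ / R) • x ∈ sphere (0 : E) ‖c‖
    rw [mem_sphere_zero_iff_norm, norm_smul, hx', norm_div, norm_norm,
      Real.norm_of_nonneg hR.le, div_mul_cancel₀ _ hR.ne']
  have hswap := measureReal_mul_integral_newtonKernel_add hE hμ hν hc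
  rw [map_measureReal_apply hscale .univ, preimage_univ] at hswap
  exact mul_left_cancel₀ measureReal_univ_ne_zero hswap

theorem integral_lt_integral_comp_newtonKernel_add [NeZero μ] (hE : 3 ≤ finrank ℝ E)
    (hμ : ∀ᵐ x ∂μ, x ∈ sphere (0 : E) R) (hc : ‖c‖ < R) (hc0 : c ≠ 0) {φ : ℝ → ℝ}
    (hφ : StrictConvexOn ℝ univ φ) :
    μ.real univ * φ (1 / R ^ (finrank ℝ E - 2)) < ∫ x, φ (newtonKernel E (x + c)) ∂μ := by
  have hR : 0 < R := (norm_nonneg c).trans_lt hc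
  have hφc : Continuous φ := by simpa using hφ.convexOn.continuousOn isOpen_univ
  have hK : ContinuousOn (fun x => newtonKernel E (x + c)) (sphere 0 R) :=
    continuousOn_newtonKernel_add.comp (f := fun x => (x, c)) (by fun_prop) fun x hx => by
      simpa only [mem_ofPred_eq, mem_sphere_zero_iff_norm.1 hx] using hc
  have hint := integrable_of_continuousOn_of_ae_mem_isCompact (isCompact_sphere 0 R) hμ hK
  have hintφ := integrable_of_continuousOn_of_ae_mem_isCompact (isCompact_sphere 0 R) hμ
    (hφc.comp_continuousOn hK)
  have hμ0 : 0 < μ.real univ := measureReal_univ_pos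
  have haverage : ⨍ x, newtonKernel E (x + c) ∂μ = 1 / R ^ (finrank ℝ E - 2) := by
    rw [average_eq, integral_newtonKernel_add (by lia) hμ hc, smul_eq_mul,
      inv_mul_cancel_left₀ hμ0.ne']
  rcases hφ.ae_eq_const_or_map_average_lt hφc.continuousOn isClosed_univ
    (.of_forall fun x => mem_univ _) hint hintφ with hconst | hlt
  · rw [haverage] at hconst
    refine absurd (eq_zero_of_ae_norm_add_eq (hμ.mono fun x => mem_sphere_zero_iff_norm.1)
      (hconst.mono fun x hx => ?_)) hc0
    have hk : finrank ℝ E - 2 ≠ 0 := by lia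
    simpa [newtonKernel, pow_left_inj₀ (norm_nonneg _) hR.le hk] using hx
  · rwa [haverage, average_eq, smul_eq_mul, ← div_eq_inv_mul, lt_div_iff₀' hμ0] at hlt

end ShellTheorem

section SurfaceMeasure

theorem finiteAtFilter_map_nhds_hausdorffMeasure {F G : Type*}
    [NormedAddCommGroup F] [NormedSpace ℝ F] [MeasurableSpace F] [BorelSpace F]
    [NormedAddCommGroup G] [NormedSpace ℝ G] [MeasurableSpace G] [BorelSpace G]
    {d : ℝ} (hd : 0 ≤ d) [IsLocallyFiniteMeasure (μH[d] : Measure F)]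
    {f : F → G} {x : F} (hf : ContDiffAt ℝ 1 f x) :
    (μH[d] : Measure G).FiniteAtFilter (map f (𝓝 x)) := by
  obtain ⟨K, t, ht, hLip⟩ := hf.exists_lipschitzOnWith
  obtain ⟨u, hu, hu_lt⟩ := (μH[d] : Measure F).finiteAt_nhds x
  refine ⟨f '' (t ∩ u), image_mem_map (inter_mem ht hu), ?_⟩
  calc _ ≤ K ^ d * μH[d] (t ∩ u) := (hLip.mono inter_subset_left).hausdorffMeasure_image_le hd
    _ < ⊤ := ENNReal.mul_lt_top (ENNReal.rpow_lt_top_of_nonneg hd ENNReal.coe_ne_top)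
      ((measure_mono inter_subset_right).trans_lt hu_lt)

variable {E : Type*} [NormedAddCommGroup E] [InnerProductSpace ℝ E]

theorem nhdsWithin_sphere_neg_eq_map_stereoInvFunAux {v : E} (hv : ‖v‖ = 1) :
    𝓝[sphere (0 : E) 1] (-v) = map (fun w : (ℝ ∙ v)ᗮ => stereoInvFunAux v w) (𝓝 0) := by
  let x : sphere (0 : E) 1 := ⟨v, mem_sphere_zero_iff_norm.2 hv⟩
  have hsymm : (stereographic hv).symm 0 = -x := by
    rw [← stereographic_apply_neg x]
    exact (stereographic hv).left_inv (ne_neg_of_mem_unit_sphere ℝ x).symm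
  calc _ = map (↑) (𝓝 (-x)) := nhdsWithin_eq_map_subtype_coe (-x).2
    _ = map (↑) (map (stereographic hv).symm (𝓝 0)) := by
        rw [(stereographic hv).symm.map_nhds_eq (mem_univ _), hsymm]
    _ = map (fun w : (ℝ ∙ v)ᗮ => stereoInvFunAux v w) (𝓝 0) := rfl

theorem ball_subset_image_orthogonalProjectionOnto_sphere {v : E} (hv : ‖v‖ = 1) (R : ℝ) :
    ball 0 R ⊆ (ℝ ∙ v)ᗮ.orthogonalProjectionOnto '' sphere (0 : E) R := fun w hw => by
  rw [mem_ball_zero_iff] at hw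
  have horth : ⟪(w : E), √(R ^ 2 - ‖w‖ ^ 2) • v⟫ = 0 := by
    rw [inner_smul_right, Submodule.mem_orthogonal_singleton_iff_inner_left.1 w.2, mul_zero]
  refine ⟨w + √(R ^ 2 - ‖w‖ ^ 2) • v, ?_, ?_⟩
  · have hR : 0 ≤ R := (norm_nonneg w).trans hw.le
    have hsqrt : √(R ^ 2 - ‖w‖ ^ 2) ^ 2 = R ^ 2 - ‖w‖ ^ 2 :=
      Real.sq_sqrt (sub_nonneg.2 (pow_le_pow_left₀ (norm_nonneg w) hw.le 2))
    rw [mem_sphere_zero_iff_norm, ← sq_eq_sq₀ (norm_nonneg _) hR, norm_add_sq_real, horth,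
      norm_smul, hv, mul_one, Real.norm_eq_abs, sq_abs, hsqrt, Submodule.coe_norm]
    ring
  · simp [Submodule.orthogonalProjectionOnto_orthogonalComplement_singleton_eq_zero]

variable [MeasurableSpace E] [BorelSpace E]

variable (E) in
/-- The surface measure of the sphere of radius `R` centred at the origin, as a measure on the
ambient space `E`: the Hausdorff measure of codimension one restricted to that sphere. -/
noncomputable def sphereMeasure (R : ℝ) : Measure E :=
  μH[(finrank ℝ E : ℝ) - 1].restrict (sphere 0 R)

variable {R : ℝ}

theorem ae_mem_sphere_sphereMeasure : ∀ᵐ x ∂sphereMeasure E R, x ∈ sphere (0 : E) R :=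
  ae_restrict_mem isClosed_sphere.measurableSet

instance isOrthogonallyInvariant_sphereMeasure : IsOrthogonallyInvariant (sphereMeasure E R) where
  measurePreserving L := by
    have h := (L.toIsometryEquiv.measurePreserving_hausdorffMeasure
      ((finrank ℝ E : ℝ) - 1)).restrict_preimage (s := sphere 0 R) isClosed_sphere.measurableSet
    rwa [LinearIsometryEquiv.coe_toIsometryEquiv, L.preimage_sphere, map_zero] at h

theorem setIntegral_sphere_eq_integral_sphereMeasure {G : Type*} [NormedAddCommGroup G]
    [NormedSpace ℝ G] (f : E → G) (c : E) :
    ∫ p in sphere c R, f p ∂μH[(finrank ℝ E : ℝ) - 1] = ∫ x, f (x + c) ∂sphereMeasure E R := by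
  have h := ((IsometryEquiv.addRight c).measurePreserving_hausdorffMeasure
    ((finrank ℝ E : ℝ) - 1)).setIntegral_preimage_emb
      (IsometryEquiv.addRight c).toHomeomorph.measurableEmbedding f (sphere c R)
  rw [IsometryEquiv.preimage_sphere] at h
  simpa [sphereMeasure] using h.symm

variable [FiniteDimensional ℝ E]

theorem isAddHaarMeasure_hausdorffMeasure_orthogonal_singleton {v : E} (hv : v ≠ 0) :
    (μH[(finrank ℝ E : ℝ) - 1] : Measure (ℝ ∙ v)ᗮ).IsAddHaarMeasure := by
  have hdim : (finrank ℝ E : ℝ) - 1 = finrank ℝ (ℝ ∙ v)ᗮ := by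
    rw [← Submodule.finrank_add_finrank_orthogonal (ℝ ∙ v), finrank_span_singleton hv]
    push_cast
    ring
  rw [hdim]
  exact isAddHaarMeasure_hausdorffMeasure

variable [Nontrivial E]

theorem hausdorffMeasure_unit_sphere_lt_top :
    μH[(finrank ℝ E : ℝ) - 1] (sphere (0 : E) 1) < ⊤ := by
  refine (isCompact_sphere 0 1).measure_lt_top_of_nhdsWithin fun x hx => ?_
  have hx1 : ‖-x‖ = 1 := by rwa [norm_neg, ← mem_sphere_zero_iff_norm]
  have := isAddHaarMeasure_hausdorffMeasure_orthogonal_singleton (norm_ne_zero_iff.1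
    (hx1 ▸ one_ne_zero))
  rw [← neg_neg x, nhdsWithin_sphere_neg_eq_map_stereoInvFunAux hx1]
  exact finiteAtFilter_map_nhds_hausdorffMeasure (finrank_sub_one_nonneg E)
    (contDiff_stereoInvFunAux.comp (Submodule.subtypeL (ℝ ∙ -x)ᗮ).contDiff).contDiffAt

instance isFiniteMeasure_sphereMeasure : IsFiniteMeasure (sphereMeasure E R) := by
  rw [sphereMeasure, isFiniteMeasure_restrict, ← lt_top_iff_ne_top]
  rcases lt_or_ge R 0 with hR | hR
  · simp [sphere_eq_empty_of_neg hR]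
  have hsphere : sphere (0 : E) R = (R • ·) '' sphere (0 : E) 1 := by
    rw [image_smul, _root_.smul_sphere _ _ zero_le_one, smul_zero, mul_one,
      Real.norm_of_nonneg hR]
  rw [hsphere]
  calc _ ≤ _ := (lipschitzWith_smul R).hausdorffMeasure_image_le (finrank_sub_one_nonneg E) _
    _ < ⊤ := ENNReal.mul_lt_top
      (ENNReal.rpow_lt_top_of_nonneg (finrank_sub_one_nonneg E) ENNReal.coe_ne_top)
      hausdorffMeasure_unit_sphere_lt_top

theorem sphereMeasure_neZero (hR : 0 < R) : NeZero (sphereMeasure E R) := by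
  obtain ⟨v, hv⟩ := exists_norm_eq E zero_le_one
  have := isAddHaarMeasure_hausdorffMeasure_orthogonal_singleton
    (norm_ne_zero_iff.1 (hv ▸ one_ne_zero))
  rw [sphereMeasure, neZero_iff, Ne, Measure.restrict_eq_zero]
  refine (lt_of_lt_of_le ?_ (hausdorffMeasure_orthogonalProjectionOnto_le (ℝ ∙ v)ᗮ _ _
    (finrank_sub_one_nonneg E))).ne'
  exact (measure_ball_pos _ 0 hR).trans_le
    (measure_mono (ball_subset_image_orthogonalProjectionOnto_sphere hv R))

end SurfaceMeasure

theorem strictConvexOn_sq_const_sub (a : ℝ) : StrictConvexOn ℝ univ fun z : ℝ => (a - z) ^ 2 := by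
  have h := (even_two.strictConvexOn_pow two_ne_zero).translate_right (c := -a)
  simpa [Function.comp_def, ← sub_eq_neg_add, sub_sq_comm] using h

theorem stmt_6_general {E : Type*} [NormedAddCommGroup E] [InnerProductSpace ℝ E]
    [FiniteDimensional ℝ E] [MeasurableSpace E] [BorelSpace E] (hE : 3 ≤ finrank ℝ E) {φ : ℝ → ℝ}
    (hφ : StrictConvexOn ℝ univ φ) {R : ℝ} {c : E} (hc : ‖c‖ < R) :
    (∫ p in sphere c R, φ (1 / ‖p‖ ^ (finrank ℝ E - 2)) ∂μH[(finrank ℝ E : ℝ) - 1]) ≥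
      (∫ _p in sphere (0 : E) R, φ (1 / R ^ (finrank ℝ E - 2)) ∂μH[(finrank ℝ E : ℝ) - 1]) ∧
    ((∫ p in sphere c R, φ (1 / ‖p‖ ^ (finrank ℝ E - 2)) ∂μH[(finrank ℝ E : ℝ) - 1]) =
      (∫ _p in sphere (0 : E) R, φ (1 / R ^ (finrank ℝ E - 2)) ∂μH[(finrank ℝ E : ℝ) - 1]) ↔
        c = 0) := by
  rcases eq_or_ne c 0 with rfl | hc0
  · have heq := setIntegral_congr_fun (μ := μH[(finrank ℝ E : ℝ) - 1])
      isClosed_sphere.measurableSet fun p (hp : p ∈ sphere (0 : E) R) =>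
        congr_arg (fun r => φ (1 / r ^ (finrank ℝ E - 2))) (mem_sphere_zero_iff_norm.1 hp)
    exact ⟨heq.ge, iff_of_true heq rfl⟩
  have : Nontrivial E := ⟨c, 0, hc0⟩
  have := sphereMeasure_neZero (E := E) ((norm_nonneg c).trans_lt hc)
  have hlt := integral_lt_integral_comp_newtonKernel_add hE ae_mem_sphere_sphereMeasure hc hc0 hφ
  rw [← smul_eq_mul, ← integral_const] at hlt
  rw [setIntegral_sphere_eq_integral_sphereMeasure]
  exact ⟨hlt.le, iff_of_false hlt.ne' hc0⟩

theorem stmt_6 (n : ℕ) (hn : 3 ≤ n) (R₁ R₂ : ℝ) (h1 : 0 < R₁) (h12 : R₁ < R₂)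
    (c : EuclideanSpace ℝ (Fin n)) (hc : ‖c‖ ≤ R₂ - R₁) :
    (∫ p in Metric.sphere c R₂, (1 / R₁ ^ (n - 2) - 1 / ‖p‖ ^ (n - 2))^2
        ∂(μH[((n:ℝ) - 1)])) ≥
      (∫ p in Metric.sphere (0 : EuclideanSpace ℝ (Fin n)) R₂,
        (1 / R₁ ^ (n - 2) - 1 / R₂ ^ (n - 2))^2 ∂(μH[((n:ℝ) - 1)])) ∧
    ((∫ p in Metric.sphere c R₂, (1 / R₁ ^ (n - 2) - 1 / ‖p‖ ^ (n - 2))^2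
        ∂(μH[((n:ℝ) - 1)])) =
      (∫ p in Metric.sphere (0 : EuclideanSpace ℝ (Fin n)) R₂,
        (1 / R₁ ^ (n - 2) - 1 / R₂ ^ (n - 2))^2 ∂(μH[((n:ℝ) - 1)])) ↔ c = 0) := by
  simpa only [finrank_euclideanSpace_fin] using stmt_6_general (E := EuclideanSpace ℝ (Fin n))
    (by simpa using hn) (strictConvexOn_sq_const_sub (1 / R₁ ^ (n - 2)))
    (show ‖c‖ < R₂ by linarith)
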